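/- Let B > 0, v0 < 0, a > 0, L > (1 + √3/2)·a, and let v : ℝ → ℝ be continuous with v0 ≤ v(r) ≤ 0 for all r ≥ 0 and v(r) = 0 for all r ≥ a. Then d(2L−a, 2L) < d̃(2L−a), and consequently S < 2 d(0, 2L−a). -/

import Mathlib

open MeasureTheory Real

/-!
Put `R = 2L - a`. Reflecting `r ↦ 2L - r` and using that the well vanishes beyond `a` gives
`S = 2 d(0, R) + (d(R, 2L) - d̃(R))`, so the second inequality is equivalent to the first.

The first says that the free distance satisfies `d̃(2L) < 2 d̃(R)`. The free potential
`W r = B²r²/4 - v0` grows at most quadratically, `W (k r) ≤ k² W r` for `k ≥ 1`, hence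
`d̃(k R) ≤ k² d̃(R)`, and it remains to check `k² < 2` for `k = 2L/R`. This is exactly the condition
`(1 + √2/2) a < L`.
-/

/-- The Agmon length of the radial segment from `r₁` to `r₂`, where `V` is the potential minus the
energy. As `√` vanishes on negative numbers, the classically allowed region contributes nothing. -/
noncomputable def agmonDist (V : ℝ → ℝ) (r₁ r₂ : ℝ) : ℝ :=
  ∫ r in r₁..r₂, √(V r)

/-- The tunnelling action `S` for two wells at distance `2L`, with `V` the potential of one well and
`W` the free one, both minus the energy. -/
noncomputable def tunnelAction (V W : ℝ → ℝ) (L : ℝ) : ℝ :=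
  2 * agmonDist V 0 L + ∫ r in (0 : ℝ)..L, (√(W (2 * L - r)) - √(W r))

/-- The radial effective potential, minus the energy `v0`, of a well `v` in a constant magnetic
field `B`. The free potential is the case `v = 0`. -/
noncomputable def magneticPotential (B v0 : ℝ) (v : ℝ → ℝ) (r : ℝ) : ℝ :=
  B ^ 2 * r ^ 2 / 4 + v r - v0

theorem intervalIntegrable_sqrt {f : ℝ → ℝ} {μ : Measure ℝ} [IsLocallyFiniteMeasure μ] {a b : ℝ}
    (hf : IntervalIntegrable f μ a b) : IntervalIntegrable (fun x => √(f x)) μ a b := by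
  have hbound : ∀ x, ‖√(f x)‖ ≤ ‖1 + |f x|‖ := fun x => by
    rw [norm_of_nonneg (sqrt_nonneg _), norm_of_nonneg (by positivity),
      sqrt_le_left (by positivity)]
    nlinarith [le_abs_self (f x), abs_nonneg (f x)]
  exact (intervalIntegrable_const.add hf.abs).mono_fun
    (continuous_sqrt.comp_aestronglyMeasurable hf.aestronglyMeasurable_restrict_uIoc)
    (.of_forall hbound)

section AgmonDist

variable {V W : ℝ → ℝ} {k L R r₁ r₂ r₃ : ℝ}

theorem agmonDist_congr (hVW : Set.EqOn V W (Set.uIcc r₁ r₂)) :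
    agmonDist V r₁ r₂ = agmonDist W r₁ r₂ :=
  intervalIntegral.integral_congr fun _ hr => congrArg sqrt (hVW hr)

theorem agmonDist_add_agmonDist (h₁₂ : IntervalIntegrable (fun r => √(V r)) volume r₁ r₂)
    (h₂₃ : IntervalIntegrable (fun r => √(V r)) volume r₂ r₃) :
    agmonDist V r₁ r₂ + agmonDist V r₂ r₃ = agmonDist V r₁ r₃ :=
  intervalIntegral.integral_add_adjacent_intervals h₁₂ h₂₃

theorem tunnelAction_eq_add_agmonDist_sub
    (h₀ : IntervalIntegrable (fun r => √(W r)) volume 0 L)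
    (h₁ : IntervalIntegrable (fun r => √(W r)) volume L (2 * L)) :
    tunnelAction V W L = 2 * agmonDist V 0 L + (agmonDist W L (2 * L) - agmonDist W 0 L) := by
  have hL : 2 * L - L = L := by ring
  have h_reflect : IntervalIntegrable (fun r => √(W (2 * L - r))) volume 0 L := by
    simpa only [hL, sub_self] using (h₁.comp_sub_left (2 * L)).symm
  rw [tunnelAction, intervalIntegral.integral_sub h_reflect h₀,
    intervalIntegral.integral_comp_sub_left (fun r => √(W r)), hL, sub_zero, ← agmonDist,
    ← agmonDist]

theorem tunnelAction_eq_add_agmonDist_sub_of_eqOn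
    (hV : IntervalIntegrable (fun r => √(V r)) volume 0 L)
    (hW : ∀ x y, IntervalIntegrable (fun r => √(W r)) volume x y)
    (hVW : Set.EqOn V W (Set.uIcc L R)) :
    tunnelAction V W L =
      2 * agmonDist V 0 R + (agmonDist W R (2 * L) - agmonDist W 0 R) := by
  have hV_LR : IntervalIntegrable (fun r => √(V r)) volume L R :=
    (hW L R).congr fun r hr => congrArg sqrt (hVW (Set.uIoc_subset_uIcc hr)).symm
  have hV_split := agmonDist_add_agmonDist hV hV_LR
  have hW_0LR := agmonDist_add_agmonDist (hW 0 L) (hW L R)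
  have hW_LR2L := agmonDist_add_agmonDist (hW L R) (hW R (2 * L))
  rw [agmonDist_congr hVW] at hV_split
  rw [tunnelAction_eq_add_agmonDist_sub (hW 0 L) (hW L (2 * L))]
  linarith

theorem agmonDist_mul_le (hk : 0 ≤ k) (hR : 0 ≤ R)
    (h₀ : IntervalIntegrable (fun r => √(W r)) volume 0 R)
    (h₁ : IntervalIntegrable (fun r => √(W r)) volume 0 (k * R))
    (hscale : ∀ r ∈ Set.Icc 0 R, W (k * r) ≤ k ^ 2 * W r) :
    agmonDist W 0 (k * R) ≤ k ^ 2 * agmonDist W 0 R := by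
  have hsqrt : ∀ r ∈ Set.Icc 0 R, √(W (k * r)) ≤ k * √(W r) := fun r hr => by
    simpa only [sqrt_mul (sq_nonneg k), sqrt_sq hk] using sqrt_le_sqrt (hscale r hr)
  have hcomp : IntervalIntegrable (fun r => √(W (k * r))) volume 0 R := by
    obtain rfl | hk0 := hk.eq_or_lt
    · simp only [zero_mul, intervalIntegrable_const]
    · simpa only [zero_div, mul_div_cancel_left₀ R hk0.ne'] using h₁.comp_mul_left (c := k)
  calc agmonDist W 0 (k * R) = k * ∫ r in (0 : ℝ)..R, √(W (k * r)) := by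
        rw [intervalIntegral.mul_integral_comp_mul_left (f := fun r => √(W r)), mul_zero, agmonDist]
    _ ≤ k * ∫ r in (0 : ℝ)..R, k * √(W r) := by
        gcongr
        exact intervalIntegral.integral_mono_on hR hcomp (h₀.const_mul k) hsqrt
    _ = k ^ 2 * agmonDist W 0 R := by
        rw [intervalIntegral.integral_const_mul, agmonDist]
        ring

theorem agmonDist_mul_lt (hk : 0 ≤ k) (hk2 : k ^ 2 < 2) (hR : 0 ≤ R)
    (h₀ : IntervalIntegrable (fun r => √(W r)) volume 0 R)
    (h₁ : IntervalIntegrable (fun r => √(W r)) volume 0 (k * R))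
    (hscale : ∀ r ∈ Set.Icc 0 R, W (k * r) ≤ k ^ 2 * W r) (hpos : 0 < agmonDist W 0 R) :
    agmonDist W R (k * R) < agmonDist W 0 R := by
  have hsplit := agmonDist_add_agmonDist h₀ (h₀.symm.trans h₁)
  have hmul := agmonDist_mul_le hk hR h₀ h₁ hscale
  have hlt : k ^ 2 * agmonDist W 0 R < 2 * agmonDist W 0 R := by gcongr
  linarith

end AgmonDist

section MagneticPotential

variable {B a L v0 : ℝ} {v : ℝ → ℝ}

theorem magneticPotential_zero_mul_le {k : ℝ} (hk : 1 ≤ k) (hv0 : v0 ≤ 0) (r : ℝ) :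
    magneticPotential B v0 0 (k * r) ≤ k ^ 2 * magneticPotential B v0 0 r := by
  have : 0 ≤ (k ^ 2 - 1) * -v0 := mul_nonneg (by nlinarith) (by linarith)
  simp only [magneticPotential, Pi.zero_apply]
  linarith

theorem intervalIntegrable_sqrt_magneticPotential {r₁ r₂ : ℝ}
    (hv : IntervalIntegrable v volume r₁ r₂) :
    IntervalIntegrable (fun r => √(magneticPotential B v0 v r)) volume r₁ r₂ := by
  refine intervalIntegrable_sqrt (.sub (.add ?_ hv) intervalIntegrable_const)
  exact Continuous.intervalIntegrable (by fun_prop) _ _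

theorem intervalIntegrable_sqrt_magneticPotential_zero (r₁ r₂ : ℝ) :
    IntervalIntegrable (fun r => √(magneticPotential B v0 0 r)) volume r₁ r₂ :=
  intervalIntegrable_sqrt_magneticPotential intervalIntegrable_const

theorem agmonDist_magneticPotential_zero_pos {R : ℝ} (hv0 : v0 < 0) (hR : 0 < R) :
    0 < agmonDist (magneticPotential B v0 0) 0 R := by
  refine intervalIntegral.intervalIntegral_pos_of_pos
    (intervalIntegrable_sqrt_magneticPotential_zero 0 R) (fun r => ?_) hR
  have : 0 ≤ B ^ 2 * r ^ 2 / 4 := by positivity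
  simp only [magneticPotential, Pi.zero_apply, sqrt_pos]
  linarith

theorem agmonDist_magneticPotential_zero_lt {R R' : ℝ} (hv0 : v0 < 0) (hR : 0 < R) (hRR' : R ≤ R')
    (hsq : R' ^ 2 < 2 * R ^ 2) :
    agmonDist (magneticPotential B v0 0) R R' < agmonDist (magneticPotential B v0 0) 0 R := by
  obtain ⟨k, rfl⟩ : ∃ k, R' = k * R := ⟨R' / R, by field_simp⟩
  have hk : 1 ≤ k := by rwa [le_mul_iff_one_le_left hR] at hRR'
  have hk2 : k ^ 2 < 2 := by rwa [mul_pow, mul_lt_mul_iff_left₀ (by positivity)] at hsq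
  exact agmonDist_mul_lt (zero_le_one.trans hk) hk2 hR.le
    (intervalIntegrable_sqrt_magneticPotential_zero _ _)
    (intervalIntegrable_sqrt_magneticPotential_zero _ _)
    (fun r _ => magneticPotential_zero_mul_le hk hv0.le r)
    (agmonDist_magneticPotential_zero_pos hv0 hR)

theorem two_mul_sq_lt_two_mul_sub_sq (ha : 0 ≤ a) (hL : (1 + √2 / 2) * a < L) :
    (2 * L) ^ 2 < 2 * (2 * L - a) ^ 2 := by
  have hsq : √2 ^ 2 = 2 := sq_sqrt zero_le_two
  have hone : 1 < √2 := by rw [lt_sqrt zero_le_one]; norm_num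
  have hlt : 2 * L < √2 * (2 * L - a) := by
    have hconst : (√2 - 1) * ((1 + √2 / 2) * a) = √2 / 2 * a := by
      linear_combination a / 2 * hsq
    linarith [mul_lt_mul_of_pos_left hL (sub_pos.mpr hone)]
  have hL0 : 0 ≤ L := (by positivity : 0 ≤ (1 + √2 / 2) * a).trans hL.le
  calc (2 * L) ^ 2 < (√2 * (2 * L - a)) ^ 2 := by gcongr
    _ = 2 * (2 * L - a) ^ 2 := by rw [mul_pow, hsq]

theorem eqOn_magneticPotential_zero (hvsupp : ∀ r, a ≤ r → v r = 0) :
    Set.EqOn (magneticPotential B v0 v) (magneticPotential B v0 0) (Set.Ici a) := fun r hr => by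
  simp only [magneticPotential, hvsupp r hr, Pi.zero_apply]

theorem stmt_6_general (hv0 : v0 < 0) (ha : 0 ≤ a) (hL : (1 + √2 / 2) * a < L)
    (hv : IntervalIntegrable v volume 0 a) (hvsupp : ∀ r, a ≤ r → v r = 0) :
    agmonDist (magneticPotential B v0 v) (2 * L - a) (2 * L) <
        agmonDist (magneticPotential B v0 0) 0 (2 * L - a) ∧
      tunnelAction (magneticPotential B v0 v) (magneticPotential B v0 0) L <
        2 * agmonDist (magneticPotential B v0 v) 0 (2 * L - a) := by
  have haL : a ≤ L := by nlinarith [sqrt_nonneg 2]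
  have haR : a ≤ 2 * L - a := by linarith
  have hR : 0 < 2 * L - a := by nlinarith [sqrt_nonneg 2]
  have hIci : ∀ {x y}, a ≤ x → a ≤ y → Set.uIcc x y ⊆ Set.Ici a := fun hx hy =>
    Set.ordConnected_Ici.uIcc_subset hx hy
  have hVW := eqOn_magneticPotential_zero (B := B) (v0 := v0) hvsupp
  have hfree := agmonDist_magneticPotential_zero_lt (B := B) hv0 hR (by linarith)
    (two_mul_sq_lt_two_mul_sub_sq ha hL)
  have hv_aL : IntervalIntegrable v volume a L :=
    (intervalIntegrable_const (c := (0 : ℝ))).congr fun r hr =>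
      (hvsupp r (Set.uIoc_of_le haL ▸ hr).1.le).symm
  constructor
  · rwa [agmonDist_congr (hVW.mono (hIci haR (by linarith)))]
  · have haction := tunnelAction_eq_add_agmonDist_sub_of_eqOn
      (intervalIntegrable_sqrt_magneticPotential (hv.trans hv_aL))
      intervalIntegrable_sqrt_magneticPotential_zero (hVW.mono (hIci haL haR))
    linarith

end MagneticPotential

/-- if `L > (1 + √3/2)·a`, then `d(2L-a, 2L) < d̃(2L-a)` and
consequently `S < 2 d(0, 2L-a)`. -/
theorem stmt_6 (B a L v0 : ℝ) (v : ℝ → ℝ)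
    (hB : 0 < B) (hv0 : v0 < 0) (ha : 0 < a)
    (hL : (1 + Real.sqrt 3 / 2) * a < L)
    (hv : Continuous v)
    (hvlb : ∀ r, 0 ≤ r → v0 ≤ v r) (hvub : ∀ r, 0 ≤ r → v r ≤ 0)
    (hvsupp : ∀ r, a ≤ r → v r = 0)
    (d : ℝ → ℝ → ℝ)
    (hd : ∀ r1 r2, d r1 r2 = ∫ r in r1..r2, Real.sqrt (B^2 * r^2 / 4 + v r - v0))
    (dfree : ℝ → ℝ)
    (hdfree : ∀ R, dfree R = ∫ r in (0:ℝ)..R, Real.sqrt (B^2 * r^2 / 4 - v0))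
    (S : ℝ)
    (hS : S = 2 * d 0 L + ∫ r in (0:ℝ)..L,
        (Real.sqrt (B^2 * (2*L - r)^2 / 4 - v0) - Real.sqrt (B^2 * r^2 / 4 - v0))) :
    d (2*L - a) (2*L) < dfree (2*L - a) ∧ S < 2 * d 0 (2*L - a) := by
  simpa only [hS, hd, hdfree, tunnelAction, agmonDist, magneticPotential, Pi.zero_apply, add_zero]
    using stmt_6_general (B := B) hv0 ha.le (hL.trans_le' (by gcongr; norm_num))
      (hv.intervalIntegrable 0 a) hvsupp
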